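/- arXiv:2403.02851 — 2 statements merged into one kernel-verified Lean document; each statement's English description precedes it below -/
import Mathlib

section
/- Let P ∈ ℝ[x] be a nonzero real polynomial. Then its quaternionic Mahler measure reduces to a one-dimensional integral: ∫_{T¹(ℍ)} log|P(q)| dμ(q) = (2/π)·∫₀^π log|P(cos θ + i sin θ)| · sin²θ dθ, where on the right P is evaluated at the complex number e^{iθ} = cos θ + i sin θ. -/
open MeasureTheory Quaternion

noncomputable instance : MeasurableSpace (Quaternion ℝ) := borel _
instance : BorelSpace (Quaternion ℝ) := ⟨rfl⟩
instance : Nonempty (Metric.sphere (0 : Quaternion ℝ) 1) := ⟨⟨1, by simp⟩⟩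

/-- The probability Haar measure `μ` on the group `T¹(ℍ)` of unit quaternions
(the Haar measure normalized so that the whole group has measure `1`). -/
noncomputable def muH : Measure (Metric.sphere (0 : Quaternion ℝ) 1) :=
  Measure.haarMeasure ⊤

/-- The quaternionic Mahler measure `m_ℍ(f) = ∫_{T¹(ℍ)} log |f(q)| dμ(q)`. -/
noncomputable def mahlerH (f : Quaternion ℝ → Quaternion ℝ) : ℝ :=
  ∫ q : Metric.sphere (0 : Quaternion ℝ) 1, Real.log ‖f q‖ ∂muH

open Filter Topology Set

/-- A finite measure on a compact interval is determined by its moments. -/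
theorem MeasureTheory.Measure.ext_of_integral_pow_eq_of_ae_mem_Icc {μ ν : Measure ℝ}
    [IsFiniteMeasure μ] [IsFiniteMeasure ν] {a b : ℝ}
    (hμ : ∀ᵐ x ∂μ, x ∈ Icc a b) (hν : ∀ᵐ x ∂ν, x ∈ Icc a b)
    (h : ∀ n : ℕ, ∫ x, x ^ n ∂μ = ∫ x, x ^ n ∂ν) : μ = ν := by
  have integrable_of_continuous {ρ : Measure ℝ} [IsFiniteMeasure ρ] (hρ : ∀ᵐ x ∂ρ, x ∈ Icc a b)
      {f : ℝ → ℝ} (hf : Continuous f) : Integrable f ρ := by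
    obtain ⟨C, hC⟩ := isCompact_Icc.exists_bound_of_continuousOn (hf.continuousOn (s := Icc a b))
    exact Integrable.of_bound hf.aestronglyMeasurable C (hρ.mono hC)
  have integral_eval {ρ : Measure ℝ} [IsFiniteMeasure ρ] (hρ : ∀ᵐ x ∂ρ, x ∈ Icc a b)
      (p : Polynomial ℝ) :
      ∫ x, p.eval x ∂ρ = ∑ i ∈ Finset.range (p.natDegree + 1), p.coeff i * ∫ x, x ^ i ∂ρ := by
    simp_rw [Polynomial.eval_eq_sum_range]
    rw [integral_finsetSum _ fun i _ ↦ integrable_of_continuous hρ (by fun_prop)]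
    simp_rw [integral_const_mul]
  have dist_le {ρ : Measure ℝ} [IsFiniteMeasure ρ] (hρ : ∀ᵐ x ∂ρ, x ∈ Icc a b)
      {f g : ℝ → ℝ} (hf : Continuous f) (hg : Continuous g) {ε : ℝ}
      (hfg : ∀ x ∈ Icc a b, |f x - g x| < ε) :
      |∫ x, f x ∂ρ - ∫ x, g x ∂ρ| ≤ ε * ρ.real univ := by
    rw [← integral_sub (integrable_of_continuous hρ hf) (integrable_of_continuous hρ hg)]
    have hbound : ∀ᵐ x ∂ρ, ‖f x - g x‖ ≤ ε := hρ.mono fun x hx ↦ (hfg x hx).le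
    exact norm_integral_le_of_norm_le_const hbound
  refine ext_of_forall_integral_eq_of_IsFiniteMeasure fun f ↦ ?_
  have key : ∀ ε > 0, |∫ x, f x ∂μ - ∫ x, f x ∂ν| ≤ ε * (μ.real univ + ν.real univ) := by
    intro ε hε
    obtain ⟨p, hp⟩ := exists_polynomial_near_of_continuousOn a b f f.continuous.continuousOn ε hε
    have h₁ := dist_le hμ p.continuous f.continuous hp
    have h₂ := dist_le hν p.continuous f.continuous hp
    have h₃ : ∫ x, p.eval x ∂μ = ∫ x, p.eval x ∂ν := by
      rw [integral_eval hμ, integral_eval hν]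
      simp_rw [h]
    rw [h₃] at h₁
    rw [abs_le] at *
    constructor <;> linarith [h₁.1, h₁.2, h₂.1, h₂.2]
  have lim : Tendsto (fun ε : ℝ ↦ ε * (μ.real univ + ν.real univ)) (𝓝[>] 0) (𝓝 0) := by
    refine Tendsto.mono_left ?_ nhdsWithin_le_nhds
    exact Continuous.tendsto' (by fun_prop) _ _ (by simp)
  have := ge_of_tendsto lim (eventually_mem_nhdsWithin.mono fun ε hε ↦ key ε hε)
  exact sub_eq_zero.mp (abs_nonpos_iff.mp this)

instance : IsProbabilityMeasure muH :=
  ⟨Measure.haarMeasure_self (K₀ := (⊤ : TopologicalSpace.PositiveCompacts _))⟩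

instance : muH.IsMulLeftInvariant := by
  unfold muH
  infer_instance

theorem Quaternion.sq_add_sq_add_sq_add_sq_eq_one (q : Metric.sphere (0 : Quaternion ℝ) 1) :
    (q : Quaternion ℝ).re ^ 2 + (q : Quaternion ℝ).imI ^ 2 + (q : Quaternion ℝ).imJ ^ 2 +
      (q : Quaternion ℝ).imK ^ 2 = 1 := by
  rw [← Quaternion.normSq_def', Quaternion.normSq_eq_norm_mul_self, norm_eq_of_mem_sphere]
  norm_num

theorem Quaternion.norm_eq_one_of_sq_add_sq_add_sq_add_sq {q : Quaternion ℝ}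
    (h : q.re ^ 2 + q.imI ^ 2 + q.imJ ^ 2 + q.imK ^ 2 = 1) : ‖q‖ = 1 := by
  rw [← Quaternion.normSq_def', Quaternion.normSq_eq_norm_mul_self] at h
  nlinarith [norm_nonneg q]

theorem integrable_muH_of_continuous {f : Metric.sphere (0 : Quaternion ℝ) 1 → ℝ}
    (hf : Continuous f) : Integrable f muH :=
  hf.integrable_of_hasCompactSupport (HasCompactSupport.of_compactSpace _)

/-- Differentiating the invariance of `muH` along the one-parameter group generated by an imaginary
unit `u = a i + b j + c k`, applied to the function `q ↦ (Re q) ^ n * Re (u q)`. -/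
theorem integral_muH_deriv_eq_zero (n : ℕ) {a b c : ℝ} (hu : a ^ 2 + b ^ 2 + c ^ 2 = 1) :
    ∫ q : Metric.sphere (0 : Quaternion ℝ) 1,
      (n * (q : Quaternion ℝ).re ^ (n - 1) *
        (a * (q : Quaternion ℝ).imI + b * (q : Quaternion ℝ).imJ + c * (q : Quaternion ℝ).imK) ^ 2
        - (q : Quaternion ℝ).re ^ (n + 1)) ∂muH = 0 := by
  set x : Metric.sphere (0 : Quaternion ℝ) 1 → ℝ := fun q ↦ (q : Quaternion ℝ).re with hx
  set y : Metric.sphere (0 : Quaternion ℝ) 1 → ℝ := fun q ↦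
    -(a * (q : Quaternion ℝ).imI + b * (q : Quaternion ℝ).imJ + c * (q : Quaternion ℝ).imK) with hy
  have x_cont : Continuous x := Quaternion.continuous_re.comp continuous_subtype_val
  have y_cont : Continuous y := by
    have h₁ : Continuous fun q : Metric.sphere (0 : Quaternion ℝ) 1 ↦ (q : Quaternion ℝ).imI :=
      Quaternion.continuous_imI.comp continuous_subtype_val
    have h₂ : Continuous fun q : Metric.sphere (0 : Quaternion ℝ) 1 ↦ (q : Quaternion ℝ).imJ :=
      Quaternion.continuous_imJ.comp continuous_subtype_val
    have h₃ : Continuous fun q : Metric.sphere (0 : Quaternion ℝ) 1 ↦ (q : Quaternion ℝ).imK :=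
      Quaternion.continuous_imK.comp continuous_subtype_val
    fun_prop
  let F : ℝ → Metric.sphere (0 : Quaternion ℝ) 1 → ℝ := fun t q ↦
    (Real.cos t * x q + Real.sin t * y q) ^ n * (Real.cos t * y q - Real.sin t * x q)
  let F' : ℝ → Metric.sphere (0 : Quaternion ℝ) 1 → ℝ := fun t q ↦
    (n * (Real.cos t * x q + Real.sin t * y q) ^ (n - 1) *
      (-Real.sin t * x q + Real.cos t * y q)) * (Real.cos t * y q - Real.sin t * x q) +
    (Real.cos t * x q + Real.sin t * y q) ^ n * (-Real.sin t * y q - Real.cos t * x q)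
  have F_cont (t : ℝ) : Continuous (F t) := by fun_prop
  have F'_cont : Continuous (Function.uncurry F') := by fun_prop
  obtain ⟨C, hC⟩ := (isCompact_Icc (a := (-1 : ℝ)) (b := 1)).prod
    (isCompact_univ (X := Metric.sphere (0 : Quaternion ℝ) 1))
    |>.exists_bound_of_continuousOn F'_cont.continuousOn
  have F_deriv (t : ℝ) (q : Metric.sphere (0 : Quaternion ℝ) 1) :
      HasDerivAt (F · q) (F' t q) t :=
    ((((Real.hasDerivAt_cos t).mul_const (x q)).add ((Real.hasDerivAt_sin t).mul_const (y q))).pow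
      n).mul (((Real.hasDerivAt_cos t).mul_const (y q)).sub
        ((Real.hasDerivAt_sin t).mul_const (x q)))
  have deriv_F := (hasDerivAt_integral_of_dominated_loc_of_deriv_le (μ := muH) (F := F) (F' := F')
    (x₀ := (0 : ℝ)) (bound := fun _ ↦ C) (Icc_mem_nhds (a := -1) (b := 1) (by simp) (by simp))
    (.of_forall fun t ↦ (F_cont t).aestronglyMeasurable)
    (integrable_muH_of_continuous (F_cont 0))
    (F'_cont.comp (Continuous.prodMk_right 0)).aestronglyMeasurable
    (.of_forall fun q t ht ↦ hC (t, q) ⟨ht, mem_univ q⟩) (integrable_const C)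
    (.of_forall fun q t _ ↦ F_deriv t q)).2
  have F_const (t : ℝ) : ∫ q, F t q ∂muH = ∫ q, F 0 q ∂muH := by
    obtain ⟨g, gre, gI, gJ, gK⟩ : ∃ g : Quaternion ℝ, g.re = Real.cos t ∧
        g.imI = Real.sin t * a ∧ g.imJ = Real.sin t * b ∧ g.imK = Real.sin t * c :=
      ⟨⟨Real.cos t, Real.sin t * a, Real.sin t * b, Real.sin t * c⟩, rfl, rfl, rfl, rfl⟩
    have hg : g ∈ Metric.sphere (0 : Quaternion ℝ) 1 := by
      refine mem_sphere_zero_iff_norm.mpr (Quaternion.norm_eq_one_of_sq_add_sq_add_sq_add_sq ?_)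
      rw [gre, gI, gJ, gK]
      linear_combination Real.sin t ^ 2 * hu + Real.sin_sq_add_cos_sq t
    rw [← integral_mul_left_eq_self (fun q ↦ F 0 q) ⟨g, hg⟩]
    congr 1 with q
    have hxg : x (⟨g, hg⟩ * q) = Real.cos t * x q + Real.sin t * y q := by
      simp only [hx, hy, Metric.unitSphere.coe_mul, Quaternion.re_mul, gre, gI, gJ, gK]
      ring
    have hyg : y (⟨g, hg⟩ * q) = Real.cos t * y q - Real.sin t * x q := by
      simp only [hx, hy, Metric.unitSphere.coe_mul, Quaternion.imI_mul, Quaternion.imJ_mul,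
        Quaternion.imK_mul, gre, gI, gJ, gK]
      linear_combination -(q : Quaternion ℝ).re * Real.sin t * hu
    simp only [F, hxg, hyg, Real.cos_zero, Real.sin_zero]
    ring
  have := deriv_F.unique ((hasDerivAt_const (0 : ℝ) (∫ q, F 0 q ∂muH)).congr_of_eventuallyEq
    (.of_forall F_const))
  refine Eq.trans ?_ this
  congr 1 with q
  simp only [F', hx, hy, Real.cos_zero, Real.sin_zero]
  ring

theorem integral_muH_re_pow_recursion (n : ℕ) :
    ∫ q : Metric.sphere (0 : Quaternion ℝ) 1,
      (n * (q : Quaternion ℝ).re ^ (n - 1) * (1 - (q : Quaternion ℝ).re ^ 2)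
        - 3 * (q : Quaternion ℝ).re ^ (n + 1)) ∂muH = 0 := by
  have h₀ : Continuous fun q : Metric.sphere (0 : Quaternion ℝ) 1 ↦ (q : Quaternion ℝ).re :=
    Quaternion.continuous_re.comp continuous_subtype_val
  have h₁ : Continuous fun q : Metric.sphere (0 : Quaternion ℝ) 1 ↦ (q : Quaternion ℝ).imI :=
    Quaternion.continuous_imI.comp continuous_subtype_val
  have h₂ : Continuous fun q : Metric.sphere (0 : Quaternion ℝ) 1 ↦ (q : Quaternion ℝ).imJ :=
    Quaternion.continuous_imJ.comp continuous_subtype_val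
  have h₃ : Continuous fun q : Metric.sphere (0 : Quaternion ℝ) 1 ↦ (q : Quaternion ℝ).imK :=
    Quaternion.continuous_imK.comp continuous_subtype_val
  have hI := integral_muH_deriv_eq_zero n (a := 1) (b := 0) (c := 0) (by norm_num)
  have hJ := integral_muH_deriv_eq_zero n (a := 0) (b := 1) (c := 0) (by norm_num)
  have hK := integral_muH_deriv_eq_zero n (a := 0) (b := 0) (c := 1) (by norm_num)
  calc
    _ = ∫ q : Metric.sphere (0 : Quaternion ℝ) 1,
        ((n * (q : Quaternion ℝ).re ^ (n - 1) * (1 * (q : Quaternion ℝ).imI +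
          0 * (q : Quaternion ℝ).imJ + 0 * (q : Quaternion ℝ).imK) ^ 2
            - (q : Quaternion ℝ).re ^ (n + 1)) +
        (n * (q : Quaternion ℝ).re ^ (n - 1) * (0 * (q : Quaternion ℝ).imI +
          1 * (q : Quaternion ℝ).imJ + 0 * (q : Quaternion ℝ).imK) ^ 2
            - (q : Quaternion ℝ).re ^ (n + 1)) +
        (n * (q : Quaternion ℝ).re ^ (n - 1) * (0 * (q : Quaternion ℝ).imI +
          0 * (q : Quaternion ℝ).imJ + 1 * (q : Quaternion ℝ).imK) ^ 2
            - (q : Quaternion ℝ).re ^ (n + 1))) ∂muH := by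
      congr 1 with q
      linear_combination -(n * (q : Quaternion ℝ).re ^ (n - 1)) *
        Quaternion.sq_add_sq_add_sq_add_sq_eq_one q
    _ = 0 := by
      rw [integral_add (integrable_muH_of_continuous (by fun_prop))
        (integrable_muH_of_continuous (by fun_prop)),
        integral_add (integrable_muH_of_continuous (by fun_prop))
        (integrable_muH_of_continuous (by fun_prop)), hI, hJ, hK, add_zero, add_zero]

/-- The measure on `(0, π]` with density `(2/π) sin² θ`; its image under `cos` is the semicircle
distribution. -/
noncomputable def sinSqMeasure : Measure ℝ :=
  (volume.restrict (Ioc 0 Real.pi)).withDensity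
    fun θ ↦ ENNReal.ofReal (2 / Real.pi * Real.sin θ ^ 2)

theorem integral_sinSqMeasure (f : ℝ → ℝ) :
    ∫ θ, f θ ∂sinSqMeasure = 2 / Real.pi * ∫ θ in (0 : ℝ)..Real.pi, f θ * Real.sin θ ^ 2 := by
  have hpi := Real.pi_pos
  rw [sinSqMeasure, integral_withDensity_eq_integral_toReal_smul (by fun_prop) (by simp),
    intervalIntegral.integral_of_le hpi.le, ← integral_const_mul]
  congr 1 with θ
  rw [ENNReal.toReal_ofReal (by positivity), smul_eq_mul]
  ring

instance : IsFiniteMeasure sinSqMeasure :=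
  isFiniteMeasure_withDensity_ofReal
    (((by fun_prop : Continuous fun θ ↦ 2 / Real.pi * Real.sin θ ^ 2).integrableOn_Ioc).2)

theorem integral_cos_pow_mul_sin_sq_recursion (n : ℕ) :
    ∫ θ in (0 : ℝ)..Real.pi, (n * Real.cos θ ^ (n - 1) * (1 - Real.cos θ ^ 2)
      - 3 * Real.cos θ ^ (n + 1)) * Real.sin θ ^ 2 = 0 := by
  have hderiv (θ : ℝ) : HasDerivAt (fun θ ↦ -(Real.cos θ ^ n * Real.sin θ ^ 3))
      ((n * Real.cos θ ^ (n - 1) * (1 - Real.cos θ ^ 2)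
        - 3 * Real.cos θ ^ (n + 1)) * Real.sin θ ^ 2) θ := by
    refine (((Real.hasDerivAt_cos θ).pow n).mul ((Real.hasDerivAt_sin θ).pow 3)).neg.congr_deriv ?_
    rw [← Real.sin_sq]
    simp only [Pi.pow_apply]
    push_cast
    ring
  rw [intervalIntegral.integral_eq_sub_of_hasDerivAt (fun θ _ ↦ hderiv θ)
    (Continuous.intervalIntegrable (by fun_prop) _ _)]
  simp

/-- Two measures whose integrals of `n x ^ (n - 1) (1 - x ^ 2) - 3 x ^ (n + 1)` all vanish and
which have the same mass have the same moments. -/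
theorem integral_pow_eq_of_recursion {μ ν : Measure ℝ}
    (hμ : ∀ n : ℕ, Integrable (fun x ↦ x ^ n) μ) (hν : ∀ n : ℕ, Integrable (fun x ↦ x ^ n) ν)
    (hμr : ∀ n : ℕ, ∫ x, (n * x ^ (n - 1) * (1 - x ^ 2) - 3 * x ^ (n + 1)) ∂μ = 0)
    (hνr : ∀ n : ℕ, ∫ x, (n * x ^ (n - 1) * (1 - x ^ 2) - 3 * x ^ (n + 1)) ∂ν = 0)
    (h₀ : ∫ x, x ^ 0 ∂μ = ∫ x, x ^ 0 ∂ν) (n : ℕ) : ∫ x, x ^ n ∂μ = ∫ x, x ^ n ∂ν := by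
  have first {ρ : Measure ℝ}
      (hρr : ∀ n : ℕ, ∫ x, (n * x ^ (n - 1) * (1 - x ^ 2) - 3 * x ^ (n + 1)) ∂ρ = 0) :
      ∫ x, x ^ 1 ∂ρ = 0 := by
    have h : -3 * ∫ x, x ^ 1 ∂ρ = 0 := by
      rw [← hρr 0, ← integral_const_mul]
      congr 1 with x
      simp
    linarith
  have step {ρ : Measure ℝ} (hρ : ∀ n : ℕ, Integrable (fun x ↦ x ^ n) ρ)
      (hρr : ∀ n : ℕ, ∫ x, (n * x ^ (n - 1) * (1 - x ^ 2) - 3 * x ^ (n + 1)) ∂ρ = 0) (n : ℕ) :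
      ∫ x, x ^ (n + 2) ∂ρ = (n + 1) / (n + 4) * ∫ x, x ^ n ∂ρ := by
    have h : ∫ x, (((n : ℝ) + 1) * x ^ n - (n + 4) * x ^ (n + 2)) ∂ρ = 0 := by
      rw [← hρr (n + 1)]
      congr 1 with x
      push_cast
      ring
    rw [integral_sub ((hρ n).const_mul _) ((hρ (n + 2)).const_mul _), integral_const_mul,
      integral_const_mul] at h
    field_simp
    linarith
  induction n using Nat.twoStepInduction with
  | zero => exact h₀
  | one => rw [first hμr, first hνr]
  | more n ih _ => rw [step hμ hμr, step hν hνr, ih]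

/-- The real part of a Haar-random unit quaternion has the semicircle distribution. -/
theorem map_re_muH_eq_map_cos_sinSqMeasure :
    muH.map (fun q : Metric.sphere (0 : Quaternion ℝ) 1 ↦ (q : Quaternion ℝ).re) =
      sinSqMeasure.map Real.cos := by
  have re_cont : Continuous fun q : Metric.sphere (0 : Quaternion ℝ) 1 ↦ (q : Quaternion ℝ).re :=
    Quaternion.continuous_re.comp continuous_subtype_val
  have re_meas := re_cont.measurable
  have int_re {f : ℝ → ℝ} (hf : Continuous f) :
      ∫ x, f x ∂(muH.map (fun q : Metric.sphere (0 : Quaternion ℝ) 1 ↦ (q : Quaternion ℝ).re)) =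
        ∫ q : Metric.sphere (0 : Quaternion ℝ) 1, f (q : Quaternion ℝ).re ∂muH :=
    integral_map re_meas.aemeasurable hf.aestronglyMeasurable
  have int_cos {f : ℝ → ℝ} (hf : Continuous f) :
      ∫ x, f x ∂(sinSqMeasure.map Real.cos) =
        2 / Real.pi * ∫ θ in (0 : ℝ)..Real.pi, f (Real.cos θ) * Real.sin θ ^ 2 := by
    rw [integral_map Real.measurable_cos.aemeasurable hf.aestronglyMeasurable,
      integral_sinSqMeasure fun θ ↦ f (Real.cos θ)]
  have mem_re : ∀ᵐ x ∂(muH.map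
      (fun q : Metric.sphere (0 : Quaternion ℝ) 1 ↦ (q : Quaternion ℝ).re)), x ∈ Icc (-1 : ℝ) 1 := by
    refine (ae_map_iff re_meas.aemeasurable measurableSet_Icc).mpr ?_
    refine .of_forall fun q ↦ abs_le.mp ?_
    rw [← sq_le_one_iff_abs_le_one]
    nlinarith [Quaternion.sq_add_sq_add_sq_add_sq_eq_one q]
  have mem_cos : ∀ᵐ x ∂(sinSqMeasure.map Real.cos), x ∈ Icc (-1 : ℝ) 1 := by
    refine (ae_map_iff Real.measurable_cos.aemeasurable measurableSet_Icc).mpr ?_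
    exact .of_forall Real.cos_mem_Icc
  have integrable_pow {ρ : Measure ℝ} [IsFiniteMeasure ρ] (hρ : ∀ᵐ x ∂ρ, x ∈ Icc (-1 : ℝ) 1)
      (n : ℕ) : Integrable (fun x ↦ x ^ n) ρ :=
    Integrable.of_bound (by fun_prop) 1 (hρ.mono fun x hx ↦ by
      simpa using pow_le_one₀ (abs_nonneg x) (abs_le.mpr hx))
  refine Measure.ext_of_integral_pow_eq_of_ae_mem_Icc mem_re mem_cos
    (integral_pow_eq_of_recursion (integrable_pow mem_re) (integrable_pow mem_cos) ?_ ?_ ?_)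
  · intro n
    rw [int_re (by fun_prop)]
    exact integral_muH_re_pow_recursion n
  · intro n
    rw [int_cos (by fun_prop), integral_cos_pow_mul_sin_sq_recursion, mul_zero]
  · rw [int_re (by fun_prop), int_cos (by fun_prop)]
    simp [integral_sin_sq]

/-- A real polynomial takes values of the same norm at a unit quaternion and at the point of the
upper unit half-circle with the same real part. -/
theorem norm_aeval_quaternion_eq_norm_aeval_complex (P : Polynomial ℝ)
    (q : Metric.sphere (0 : Quaternion ℝ) 1) :
    ‖Polynomial.aeval (q : Quaternion ℝ) P‖ = ‖Polynomial.aeval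
      (((q : Quaternion ℝ).re : ℂ) + √(1 - (q : Quaternion ℝ).re ^ 2) * Complex.I) P‖ := by
  obtain ⟨a, b, c, hu, hI, hJ, hK⟩ : ∃ a b c : ℝ, a ^ 2 + b ^ 2 + c ^ 2 = 1 ∧
      (q : Quaternion ℝ).imI = √(1 - (q : Quaternion ℝ).re ^ 2) * a ∧
      (q : Quaternion ℝ).imJ = √(1 - (q : Quaternion ℝ).re ^ 2) * b ∧
      (q : Quaternion ℝ).imK = √(1 - (q : Quaternion ℝ).re ^ 2) * c := by
    have hq := Quaternion.sq_add_sq_add_sq_add_sq_eq_one q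
    have hs : √(1 - (q : Quaternion ℝ).re ^ 2) ^ 2 = 1 - (q : Quaternion ℝ).re ^ 2 :=
      Real.sq_sqrt (by nlinarith)
    set s := √(1 - (q : Quaternion ℝ).re ^ 2)
    by_cases h : s = 0
    · rw [h] at hs
      refine ⟨1, 0, 0, by norm_num, ?_, ?_, ?_⟩ <;> nlinarith
    · refine ⟨(q : Quaternion ℝ).imI / s, (q : Quaternion ℝ).imJ / s, (q : Quaternion ℝ).imK / s,
        ?_, ?_, ?_, ?_⟩ <;> field_simp
      linarith
  obtain ⟨u, ure, uI, uJ, uK⟩ : ∃ u : Quaternion ℝ, u.re = 0 ∧ u.imI = a ∧ u.imJ = b ∧ u.imK = c :=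
    ⟨⟨0, a, b, c⟩, rfl, rfl, rfl, rfl⟩
  have huu : u * u = -1 := by
    ext <;> simp [ure, uI, uJ, uK]
    · linear_combination -hu
    all_goals ring
  let φ : ℂ →ₐ[ℝ] Quaternion ℝ := Complex.lift ⟨u, huu⟩
  have hφ (z : ℂ) : φ z = algebraMap ℝ (Quaternion ℝ) z.re + z.im • u := by
    simp only [φ, Complex.lift_apply, Complex.liftAux_apply]
  have norm_φ (z : ℂ) : ‖φ z‖ = ‖z‖ := by
    rw [← sq_eq_sq₀ (norm_nonneg _) (norm_nonneg _), ← Complex.normSq_eq_norm_sq, sq,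
      ← Quaternion.normSq_eq_norm_mul_self, Quaternion.normSq_def', hφ, Complex.normSq_apply]
    simp [ure, uI, uJ, uK]
    linear_combination z.im ^ 2 * hu
  have φ_eq : φ (((q : Quaternion ℝ).re : ℂ) + √(1 - (q : Quaternion ℝ).re ^ 2) * Complex.I) =
      q := by
    rw [hφ]
    ext <;> simp [ure, uI, uJ, uK, hI, hJ, hK]
  rw [← norm_φ, ← Polynomial.aeval_algHom_apply, φ_eq]

/-- reduction of the quaternionic Mahler measure of a real polynomial
to a one-dimensional integral over the unit circle. -/
theorem mahlerH_real_poly_eq_circle_integral (P : Polynomial ℝ) (hP : P ≠ 0) :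
    (∫ q : Metric.sphere (0 : Quaternion ℝ) 1,
        Real.log ‖Polynomial.aeval (q : Quaternion ℝ) P‖ ∂muH) =
      (2 / Real.pi) *
        ∫ θ in (0 : ℝ)..Real.pi,
          Real.log ‖Polynomial.aeval ((Real.cos θ : ℂ) + Real.sin θ * Complex.I) P‖ *
            Real.sin θ ^ 2 := by
  let F : ℝ → ℝ := fun x ↦
    Real.log ‖Polynomial.aeval ((x : ℂ) + √(1 - x ^ 2) * Complex.I) P‖
  have F_meas : Measurable F := by
    have : Continuous fun x : ℝ ↦ ‖Polynomial.aeval ((x : ℂ) + √(1 - x ^ 2) * Complex.I) P‖ := by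
      simp_rw [Polynomial.aeval_def, Polynomial.eval₂_eq_sum_range]
      fun_prop
    exact Real.measurable_log.comp this.measurable
  have re_meas : Measurable fun q : Metric.sphere (0 : Quaternion ℝ) 1 ↦ (q : Quaternion ℝ).re :=
    (Quaternion.continuous_re.comp continuous_subtype_val).measurable
  calc
    _ = ∫ q : Metric.sphere (0 : Quaternion ℝ) 1, F (q : Quaternion ℝ).re ∂muH := by
      simp_rw [norm_aeval_quaternion_eq_norm_aeval_complex, F]
    _ = ∫ x, F x ∂(sinSqMeasure.map Real.cos) := by
      rw [← map_re_muH_eq_map_cos_sinSqMeasure,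
        integral_map re_meas.aemeasurable F_meas.aestronglyMeasurable]
    _ = 2 / Real.pi * ∫ θ in (0 : ℝ)..Real.pi, F (Real.cos θ) * Real.sin θ ^ 2 := by
      rw [integral_map Real.measurable_cos.aemeasurable F_meas.aestronglyMeasurable,
        integral_sinSqMeasure fun θ ↦ F (Real.cos θ)]
    _ = _ := by
      congr 1
      refine intervalIntegral.integral_congr fun θ hθ ↦ ?_
      rw [uIcc_of_le Real.pi_pos.le] at hθ
      simp only [F]
      rw [← Real.sin_sq, Real.sqrt_sq (Real.sin_nonneg_of_mem_Icc hθ)]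
end

section
/- Let P(q) = Σ_{k=0}^n qᵏ aₖ be a nonzero slice regular quaternionic polynomial. Then there exist constants C > 0 and δ > 0, depending only on P, such that for all ε > 0, μ({q ∈ T¹(ℍ) : |P(q)| ≤ ε}) ≤ C·ε^δ. -/
open MeasureTheory Quaternion

open Polynomial

/-- The measure of the sublevel sets `{F ≤ ε}` is at most a constant times a power of `ε`. -/
def HasPowerSublevelBound {α : Type*} [MeasurableSpace α] (μ : Measure α) (F : α → ℝ) : Prop :=
  ∃ C > (0 : ℝ), ∃ δ > (0 : ℝ), ∀ ε > (0 : ℝ), μ.real {x | F x ≤ ε} ≤ C * ε ^ δ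

namespace HasPowerSublevelBound

variable {α : Type*} [MeasurableSpace α] {μ : Measure α} [IsProbabilityMeasure μ] {F G : α → ℝ}

/-- For a probability measure only the levels `ε ≤ 1` matter. -/
theorem of_le_one {C δ : ℝ} (hδ : 0 < δ)
    (h : ∀ ε > (0 : ℝ), ε ≤ 1 → μ.real {x | F x ≤ ε} ≤ C * ε ^ δ) :
    HasPowerSublevelBound μ F := by
  refine ⟨max C 1, by positivity, δ, hδ, fun ε hε => ?_⟩
  rcases le_total ε 1 with h1 | h1
  · exact (h ε hε h1).trans (by gcongr; exact le_max_left _ _)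
  · calc μ.real {x | F x ≤ ε} ≤ 1 * 1 := by simp
      _ ≤ max C 1 * ε ^ δ := by
        gcongr
        · exact le_max_right _ _
        · exact Real.one_le_rpow h1 hδ.le

theorem of_le_mul {c : ℝ} (hc : 0 < c) (hG : HasPowerSublevelBound μ G)
    (h : ∀ x, G x ≤ c * F x) : HasPowerSublevelBound μ F := by
  obtain ⟨C, hC, δ, hδ, hb⟩ := hG
  refine ⟨C * c ^ δ, by positivity, δ, hδ, fun ε hε => ?_⟩
  calc μ.real {x | F x ≤ ε} ≤ μ.real {x | G x ≤ c * ε} :=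
        measureReal_mono fun x (hx : F x ≤ ε) => (h x).trans (by gcongr)
    _ ≤ C * (c * ε) ^ δ := hb _ (by positivity)
    _ = C * c ^ δ * ε ^ δ := by rw [Real.mul_rpow hc.le hε.le]; ring

theorem of_pos_le {c : ℝ} (hc : 0 < c) (h : ∀ x, c ≤ F x) : HasPowerSublevelBound μ F := by
  refine ⟨c⁻¹, by positivity, 1, one_pos, fun ε hε => ?_⟩
  rw [Real.rpow_one]
  rcases lt_or_ge ε c with h1 | h1
  · have : {x | F x ≤ ε} = ∅ :=
      Set.eq_empty_of_forall_notMem fun x (hx : F x ≤ ε) => by linarith [h x]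
    rw [this, measureReal_empty]
    positivity
  · refine measureReal_le_one.trans ?_
    rw [inv_mul_eq_div, le_div_iff₀ hc]
    linarith

theorem mul (hF : HasPowerSublevelBound μ F) (hG : HasPowerSublevelBound μ G) :
    HasPowerSublevelBound μ fun x => F x * G x := by
  obtain ⟨C₁, hC₁, δ₁, hδ₁, h₁⟩ := hF
  obtain ⟨C₂, hC₂, δ₂, hδ₂, h₂⟩ := hG
  refine of_le_one (C := C₁ + C₂) (δ := min δ₁ δ₂ / 2) (by positivity) fun ε hε hε1 => ?_
  have hs : 0 < √ε := Real.sqrt_pos.2 hε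
  have hs1 : √ε ≤ 1 := Real.sqrt_le_one.2 hε1
  have hpow : ε ^ (min δ₁ δ₂ / 2) = √ε ^ min δ₁ δ₂ := by
    rw [Real.sqrt_eq_rpow, ← Real.rpow_mul hε.le]
    ring_nf
  calc μ.real {x | F x * G x ≤ ε} ≤ μ.real ({x | F x ≤ √ε} ∪ {x | G x ≤ √ε}) := by
        refine measureReal_mono fun x (hx : F x * G x ≤ ε) => ?_
        by_contra hn
        simp only [Set.mem_union, Set.mem_ofPred_eq, not_or, not_le] at hn
        nlinarith [Real.mul_self_sqrt hε.le, mul_pos (sub_pos.2 hn.1) (sub_pos.2 hn.2),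
          mul_pos hs (sub_pos.2 hn.1), mul_pos hs (sub_pos.2 hn.2)]
    _ ≤ μ.real {x | F x ≤ √ε} + μ.real {x | G x ≤ √ε} := measureReal_union_le _ _
    _ ≤ C₁ * √ε ^ δ₁ + C₂ * √ε ^ δ₂ := add_le_add (h₁ _ hs) (h₂ _ hs)
    _ ≤ C₁ * √ε ^ min δ₁ δ₂ + C₂ * √ε ^ min δ₁ δ₂ := by
        gcongr ?_ * ?_ + ?_ * ?_
        · exact Real.rpow_le_rpow_of_exponent_ge hs hs1 (min_le_left _ _)
        · exact Real.rpow_le_rpow_of_exponent_ge hs hs1 (min_le_right _ _)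
    _ = (C₁ + C₂) * ε ^ (min δ₁ δ₂ / 2) := by rw [hpow]; ring

/-- Optimising over `N` the estimate provided by `N` translates of a sublevel set. -/
theorem of_forall_nat (hG : HasPowerSublevelBound μ G)
    (h : ∀ N : ℕ, 0 < N → ∀ ρ > (0 : ℝ),
      N * μ.real {x | F x ≤ ρ} ≤ 1 + N ^ 2 * μ.real {x | G x ≤ 4 * N * ρ}) :
    HasPowerSublevelBound μ F := by
  obtain ⟨C, hC, δ, hδ, hb⟩ := hG
  set γ : ℝ := δ / (2 + δ) with hγ
  have hγ0 : 0 < γ := by positivity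
  refine of_le_one (C := 1 + 2 * C * 8 ^ δ) hγ0 fun ρ hρ hρ1 => ?_
  set t : ℝ := ρ ^ (-γ) with ht
  have ht1 : 1 ≤ t := Real.one_le_rpow_of_pos_of_le_one_of_nonpos hρ hρ1 (by linarith)
  have ht0 : 0 < t := by linarith
  have htinv : t * ρ ^ γ = 1 := by rw [ht, ← Real.rpow_add hρ]; simp
  have hN0 : 0 < ⌈t⌉₊ := Nat.ceil_pos.2 ht0
  set N := ⌈t⌉₊ with hN
  have hNt : t ≤ N := Nat.le_ceil t
  have hN2 : (N : ℝ) ≤ 2 * t := by linarith [Nat.ceil_lt_add_one ht0.le]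
  have hNpos : (0 : ℝ) < N := by exact_mod_cast hN0
  have hpow : t * (t * ρ) ^ δ = ρ ^ γ := by
    rw [ht, ← Real.rpow_add_one hρ.ne', ← Real.rpow_mul hρ.le, ← Real.rpow_add hρ]
    congr 1
    rw [hγ]
    field_simp
    ring
  have h1 : μ.real {x | G x ≤ 4 * N * ρ} ≤ C * (8 ^ δ * (t * ρ) ^ δ) :=
    calc μ.real {x | G x ≤ 4 * N * ρ} ≤ C * (4 * N * ρ) ^ δ := hb _ (by positivity)
      _ ≤ C * (8 * (t * ρ)) ^ δ := by
          gcongr ?_ * ?_ ^ δ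
          nlinarith
      _ = C * (8 ^ δ * (t * ρ) ^ δ) := by rw [Real.mul_rpow (by norm_num) (by positivity)]
  have h2 : (N : ℝ) * μ.real {x | F x ≤ ρ} ≤ N * (ρ ^ γ + N * (C * (8 ^ δ * (t * ρ) ^ δ))) :=
    calc (N : ℝ) * μ.real {x | F x ≤ ρ} ≤ 1 + N ^ 2 * μ.real {x | G x ≤ 4 * N * ρ} := h N hN0 ρ hρ
      _ ≤ N * ρ ^ γ + N ^ 2 * (C * (8 ^ δ * (t * ρ) ^ δ)) := by
          gcongr
          rw [← htinv]
          gcongr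
      _ = N * (ρ ^ γ + N * (C * (8 ^ δ * (t * ρ) ^ δ))) := by ring
  calc μ.real {x | F x ≤ ρ} ≤ ρ ^ γ + N * (C * (8 ^ δ * (t * ρ) ^ δ)) :=
        le_of_mul_le_mul_left h2 hNpos
    _ ≤ ρ ^ γ + 2 * t * (C * (8 ^ δ * (t * ρ) ^ δ)) := by gcongr
    _ = ρ ^ γ + 2 * C * 8 ^ δ * (t * (t * ρ) ^ δ) := by ring
    _ = (1 + 2 * C * 8 ^ δ) * ρ ^ γ := by rw [hpow]; ring

end HasPowerSublevelBound

/-- If the left translates of `S` by `N` elements have small pairwise intersections, then `S` is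
small. -/
theorem mul_measureReal_le_of_translates {G : Type*} [Group G] [MeasurableSpace G]
    [MeasurableMul G] (μ : Measure G) [IsProbabilityMeasure μ] [μ.IsMulLeftInvariant] {S : Set G}
    (hS : MeasurableSet S) (g : ℕ → G) (N : ℕ) {η : ℝ} (hη : 0 ≤ η)
    (h : ∀ i < N, ∀ j < i, μ.real ((g j * ·) ⁻¹' S ∩ (g i * ·) ⁻¹' S) ≤ η) :
    N * μ.real S ≤ 1 + N ^ 2 * η := by
  have hm : ∀ i, MeasurableSet ((g i * ·) ⁻¹' S) := fun i => measurable_const_mul (g i) hS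
  have hinv : ∀ i, μ.real ((g i * ·) ⁻¹' S) = μ.real S := fun i => by
    simp only [measureReal_def, measure_preimage_mul]
  have key : ∀ m ≤ N, m * μ.real S ≤
      μ.real (⋃ i ∈ Finset.range m, (g i * ·) ⁻¹' S) + ∑ i ∈ Finset.range m, i * η := by
    intro m
    induction m with
    | zero => simp
    | succ m ih =>
      intro hmN
      have ih' := ih (by omega)
      have hU := measureReal_union_add_inter (μ := μ)
        (s := ⋃ i ∈ Finset.range m, (g i * ·) ⁻¹' S) (hm m) (measure_ne_top _ _)
          (measure_ne_top _ _)
      have hI : μ.real ((⋃ i ∈ Finset.range m, (g i * ·) ⁻¹' S) ∩ (g m * ·) ⁻¹' S) ≤ m * η := by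
        rw [Set.iUnion₂_inter]
        refine (measureReal_biUnion_finset_le _ _).trans ?_
        refine (Finset.sum_le_card_nsmul _ _ η fun i hi =>
          h m (by omega) i (Finset.mem_range.1 hi)).trans ?_
        simp
      have hE : (⋃ i ∈ Finset.range (m + 1), (g i * ·) ⁻¹' S) =
          (⋃ i ∈ Finset.range m, (g i * ·) ⁻¹' S) ∪ (g m * ·) ⁻¹' S := by
        rw [Finset.range_add_one, Finset.set_biUnion_insert, Set.union_comm]
      rw [hE, Finset.sum_range_succ]
      rw [hinv] at hU
      push_cast
      linarith
  have hsum : ∑ i ∈ Finset.range N, (i : ℝ) * η ≤ N ^ 2 * η := by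
    refine (Finset.sum_le_card_nsmul _ _ (N * η) fun i hi => ?_).trans_eq ?_
    · have : (i : ℝ) ≤ N := by exact_mod_cast (Finset.mem_range.1 hi).le
      gcongr
    · simp; ring
  linarith [key N le_rfl, measureReal_le_one (μ := μ)
    (s := ⋃ i ∈ Finset.range N, (g i * ·) ⁻¹' S)]

instance inst_s14 : IsProbabilityMeasure muH :=
  ⟨by rw [muH, ← TopologicalSpace.PositiveCompacts.coe_top]; exact Measure.haarMeasure_self⟩

instance inst_s14_2 : muH.IsMulLeftInvariant := inferInstanceAs (Measure.haarMeasure ⊤).IsMulLeftInvariant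

namespace UnitQuaternion

local notation "𝕊" => Metric.sphere (0 : Quaternion ℝ) 1

theorem sum_sq_eq_one (q : 𝕊) :
    q.1.re ^ 2 + q.1.imI ^ 2 + q.1.imJ ^ 2 + q.1.imK ^ 2 = 1 := by
  rw [← Quaternion.normSq_def', Quaternion.normSq_eq_norm_mul_self]
  simp

theorem abs_re_le_norm (q : Quaternion ℝ) : |q.re| ≤ ‖q‖ := by
  refine abs_le_of_sq_le_sq ?_ (norm_nonneg q)
  rw [sq ‖q‖, ← Quaternion.normSq_eq_norm_mul_self, Quaternion.normSq_def']
  nlinarith [sq_nonneg q.imI, sq_nonneg q.imJ, sq_nonneg q.imK]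

theorem abs_imI_le_norm (q : Quaternion ℝ) : |q.imI| ≤ ‖q‖ := by
  refine abs_le_of_sq_le_sq ?_ (norm_nonneg q)
  rw [sq ‖q‖, ← Quaternion.normSq_eq_norm_mul_self, Quaternion.normSq_def']
  nlinarith [sq_nonneg q.re, sq_nonneg q.imJ, sq_nonneg q.imK]

/-- The quaternion with the given components. -/
def ofComponents (a b c d : ℝ) : Quaternion ℝ :=
  (⟨a, b, c, d⟩ : QuaternionAlgebra ℝ (-1) 0 (-1))

section ofComponents

variable (a b c d : ℝ)

@[simp] theorem re_ofComponents : (ofComponents a b c d).re = a := rfl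

@[simp] theorem imI_ofComponents : (ofComponents a b c d).imI = b := rfl

@[simp] theorem imJ_ofComponents : (ofComponents a b c d).imJ = c := rfl

@[simp] theorem imK_ofComponents : (ofComponents a b c d).imK = d := rfl

theorem ofComponents_mem_sphere {a b c d : ℝ} (h : a ^ 2 + b ^ 2 + c ^ 2 + d ^ 2 = 1) :
    ofComponents a b c d ∈ 𝕊 := by
  rw [mem_sphere_zero_iff_norm, ← sq_eq_sq₀ (norm_nonneg _) zero_le_one, sq,
    ← Quaternion.normSq_eq_norm_mul_self, Quaternion.normSq_def']
  simpa using h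

end ofComponents

/-- The one-parameter subgroup `cos θ + i sin θ`. -/
noncomputable def rotI (θ : ℝ) : 𝕊 :=
  ⟨ofComponents (Real.cos θ) (Real.sin θ) 0 0, ofComponents_mem_sphere (by simp)⟩

/-- The one-parameter subgroup `cos θ + j sin θ`. -/
noncomputable def rotJ (θ : ℝ) : 𝕊 :=
  ⟨ofComponents (Real.cos θ) 0 (Real.sin θ) 0, ofComponents_mem_sphere (by simp)⟩

theorem re_rotI_mul (θ : ℝ) (q : 𝕊) :
    (rotI θ * q).1.re = Real.cos θ * q.1.re - Real.sin θ * q.1.imI := by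
  simp [rotI]

theorem re_rotJ_mul (θ : ℝ) (q : 𝕊) :
    (rotJ θ * q).1.re = Real.cos θ * q.1.re - Real.sin θ * q.1.imJ := by
  simp [rotJ]

theorem imI_rotJ_mul (θ : ℝ) (q : 𝕊) :
    (rotJ θ * q).1.imI = Real.cos θ * q.1.imI - Real.sin θ * -q.1.imK := by
  simp [rotJ]

theorem continuous_re : Continuous fun q : 𝕊 => q.1.re :=
  Quaternion.continuous_re.comp continuous_subtype_val

theorem continuous_imI : Continuous fun q : 𝕊 => q.1.imI :=
  Quaternion.continuous_imI.comp continuous_subtype_val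

/-- The angles `i / N`, `i < N`, are `1 / N`-separated. -/
theorem one_le_two_mul_sin {N i j : ℕ} (hi : i < N) (hj : j < i) :
    1 ≤ 2 * N * Real.sin ((i : ℝ) / N - (j : ℝ) / N) := by
  have hN : (0 : ℝ) < N := by exact_mod_cast (by omega : 0 < N)
  have hij : (j : ℝ) + 1 ≤ i := by exact_mod_cast hj
  have hiN : (i : ℝ) ≤ N := by exact_mod_cast hi.le
  have hj0 : (0 : ℝ) ≤ j := j.cast_nonneg
  set x : ℝ := (i : ℝ) / N - (j : ℝ) / N with hx
  have hxN : N * x = i - j := by rw [hx]; field_simp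
  have hx0 : 0 < x := by
    by_contra hn
    nlinarith
  have hx1 : x ≤ 1 := by
    by_contra hn
    nlinarith
  have hs : x / 2 ≤ Real.sin x := by
    have := Real.sin_gt_sub_cube hx0
    nlinarith [mul_nonneg hx0.le (mul_nonneg (sub_nonneg.2 hx1) (by linarith : 0 ≤ 1 + x))]
  nlinarith

theorem abs_le_of_abs_rotations_le {θ φ x y ρ K : ℝ} (hK0 : 0 ≤ K)
    (hK : 1 ≤ K * Real.sin (θ - φ)) (hφ : |Real.cos φ * x - Real.sin φ * y| ≤ ρ)
    (hθ : |Real.cos θ * x - Real.sin θ * y| ≤ ρ) : |x| ≤ 2 * K * ρ ∧ |y| ≤ 2 * K * ρ := by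
  have scale : ∀ z, |Real.sin (θ - φ) * z| ≤ 2 * ρ → |z| ≤ 2 * K * ρ := fun z hz => by
    have h1 : K * |Real.sin (θ - φ) * z| ≤ K * (2 * ρ) := by gcongr
    rw [abs_mul, ← mul_assoc] at h1
    have h2 : 1 ≤ K * |Real.sin (θ - φ)| := hK.trans (by gcongr; exact le_abs_self _)
    nlinarith [abs_nonneg z]
  have comb : ∀ u v, |u| ≤ 1 → |v| ≤ 1 →
      |u * (Real.cos φ * x - Real.sin φ * y) - v * (Real.cos θ * x - Real.sin θ * y)| ≤ 2 * ρ :=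
    fun u v hu hv => by
      refine (abs_sub _ _).trans ?_
      rw [abs_mul, abs_mul]
      nlinarith [mul_le_mul hu hφ (abs_nonneg _) zero_le_one,
        mul_le_mul hv hθ (abs_nonneg _) zero_le_one]
  constructor <;> apply scale
  · convert comb _ _ (Real.abs_sin_le_one θ) (Real.abs_sin_le_one φ) using 2
    rw [Real.sin_sub]; ring
  · convert comb _ _ (Real.abs_cos_le_one θ) (Real.abs_cos_le_one φ) using 2
    rw [Real.sin_sub]; ring

theorem hasPowerSublevelBound_comp_mul_left {F : 𝕊 → ℝ} (hF : HasPowerSublevelBound muH F)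
    (g : 𝕊) : HasPowerSublevelBound muH fun q => F (g * q) := by
  obtain ⟨C, hC, δ, hδ, hb⟩ := hF
  refine ⟨C, hC, δ, hδ, fun ε hε => (hb ε hε).trans' (le_of_eq ?_)⟩
  exact congrArg ENNReal.toReal (measure_preimage_mul muH g {q | F q ≤ ε})

theorem hasPowerSublevelBound_of_translates {F G : 𝕊 → ℝ} (hF : Continuous F)
    (hG : HasPowerSublevelBound muH G) (g : ℝ → 𝕊)
    (h : ∀ (K θ φ ρ : ℝ), 0 < K → 1 ≤ K * Real.sin (θ - φ) →
      ∃ u : 𝕊, ∀ q, F (g φ * q) ≤ ρ → F (g θ * q) ≤ ρ → G (u * q) ≤ 2 * K * ρ) :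
    HasPowerSublevelBound muH F := by
  refine hG.of_forall_nat fun N hN ρ hρ => ?_
  refine mul_measureReal_le_of_translates muH (isClosed_le hF continuous_const).measurableSet
    (fun i => g (i / N)) N measureReal_nonneg fun i hi j hj => ?_
  have hN' : (0 : ℝ) < N := by exact_mod_cast hN
  obtain ⟨u, hu⟩ := h (2 * N) (i / N) (j / N) ρ (by positivity) (one_le_two_mul_sin hi hj)
  calc muH.real _ ≤ muH.real ((u * ·) ⁻¹' {q | G q ≤ 4 * N * ρ}) :=
        measureReal_mono fun q hq => (hu q hq.1 hq.2).trans_eq (by ring)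
    _ = muH.real {q | G q ≤ 4 * N * ρ} := congrArg ENNReal.toReal (measure_preimage_mul muH u _)

theorem hasPowerSublevelBound_max_re_imI :
    HasPowerSublevelBound muH fun q : 𝕊 => max |q.1.re| |q.1.imI| := by
  have hG : HasPowerSublevelBound muH fun q : 𝕊 =>
      max (max |q.1.re| |q.1.imI|) (max |q.1.imJ| |q.1.imK|) := by
    refine HasPowerSublevelBound.of_pos_le (c := 1 / 2) (by norm_num) fun q => ?_
    by_contra! hn
    simp only [max_lt_iff] at hn
    obtain ⟨⟨h0, h1⟩, h2, h3⟩ := hn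
    have := sum_sq_eq_one q
    rw [← sq_abs q.1.re, ← sq_abs q.1.imI, ← sq_abs q.1.imJ, ← sq_abs q.1.imK] at this
    nlinarith [abs_nonneg q.1.re, abs_nonneg q.1.imI, abs_nonneg q.1.imJ, abs_nonneg q.1.imK]
  refine hasPowerSublevelBound_of_translates (continuous_re.abs.max continuous_imI.abs) hG rotJ
    fun K θ φ ρ hK0 hK => ⟨1, fun q h1 h2 => ?_⟩
  simp only [re_rotJ_mul, imI_rotJ_mul, max_le_iff] at h1 h2
  obtain ⟨h3, h4⟩ := abs_le_of_abs_rotations_le hK0.le hK h1.1 h2.1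
  obtain ⟨h5, h6⟩ := abs_le_of_abs_rotations_le hK0.le hK h1.2 h2.2
  rw [abs_neg] at h6
  rw [one_mul]
  exact max_le (max_le h3 h5) (max_le h4 h6)

theorem hasPowerSublevelBound_re : HasPowerSublevelBound muH fun q : 𝕊 => |q.1.re| := by
  refine hasPowerSublevelBound_of_translates continuous_re.abs hasPowerSublevelBound_max_re_imI
    rotI fun K θ φ ρ hK0 hK => ⟨1, fun q h1 h2 => ?_⟩
  rw [re_rotI_mul] at h1 h2
  rw [one_mul]
  exact max_le_iff.2 (abs_le_of_abs_rotations_le hK0.le hK h1 h2)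

theorem hasPowerSublevelBound_imI : HasPowerSublevelBound muH fun q : 𝕊 => |q.1.imI| := by
  have := hasPowerSublevelBound_comp_mul_left hasPowerSublevelBound_re (rotI (Real.pi / 2))
  simpa only [re_rotI_mul, Real.cos_pi_div_two, Real.sin_pi_div_two, zero_mul, one_mul, zero_sub,
    abs_neg] using this

theorem hasPowerSublevelBound_re_sub (t : ℝ) :
    HasPowerSublevelBound muH fun q : 𝕊 => |q.1.re - t| := by
  refine hasPowerSublevelBound_of_translates (continuous_re.sub continuous_const).abs
    hasPowerSublevelBound_re rotI
    fun K θ φ ρ hK0 hK => ⟨rotI ((θ + φ) / 2 - Real.pi / 2), fun q h1 h2 => ?_⟩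
  rw [re_rotI_mul] at h1 h2
  rw [re_rotI_mul, Real.cos_sub_pi_div_two, Real.sin_sub_pi_div_two]
  set z := Real.sin ((θ + φ) / 2) * q.1.re - -Real.cos ((θ + φ) / 2) * q.1.imI with hz
  have hdiff : 2 * Real.sin ((θ - φ) / 2) * z =
      (Real.cos φ * q.1.re - Real.sin φ * q.1.imI - t) -
        (Real.cos θ * q.1.re - Real.sin θ * q.1.imI - t) := by
    have hc := Real.cos_sub_cos θ φ
    have hs := Real.sin_sub_sin θ φ
    rw [hz]
    linear_combination q.1.re * hc - q.1.imI * hs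
  have hle : |2 * Real.sin ((θ - φ) / 2) * z| ≤ 2 * ρ := by
    rw [hdiff]
    exact (abs_sub _ _).trans (by linarith)
  have hsin : Real.sin (θ - φ) ≤ |2 * Real.sin ((θ - φ) / 2)| := by
    have h2 : Real.sin (θ - φ) = 2 * Real.sin ((θ - φ) / 2) * Real.cos ((θ - φ) / 2) := by
      rw [← Real.sin_two_mul]; ring_nf
    rw [h2]
    refine (le_abs_self _).trans ?_
    rw [abs_mul _ (Real.cos _)]
    exact mul_le_of_le_one_right (abs_nonneg _) (Real.abs_cos_le_one _)
  rw [abs_mul] at hle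
  have h3 : 1 ≤ K * |2 * Real.sin ((θ - φ) / 2)| := hK.trans (by gcongr)
  have h4 := mul_le_mul_of_nonneg_left hle hK0.le
  nlinarith [abs_nonneg z]

theorem hasPowerSublevelBound_of_natDegree_le_two {p : ℝ[X]} (hp : p ≠ 0)
    (hdeg : p.natDegree ≤ 2) : HasPowerSublevelBound muH fun q : 𝕊 => ‖aeval q.1 p‖ := by
  obtain ⟨a, b, c, rfl⟩ : ∃ a b c, p = C a * X ^ 2 + C b * X + C c :=
    ⟨p.coeff 2, p.coeff 1, p.coeff 0, p.as_sum_range_C_mul_X_pow' (n := 3) (by omega) |>.trans (by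
      simp only [Finset.sum_range_succ, Finset.sum_range_zero]; ring)⟩
  have hconj : ∀ q : 𝕊, ‖aeval q.1 (C a * X ^ 2 + C b * X + C c)‖ =
      ‖(a : Quaternion ℝ) * q.1 + b + c * star q.1‖ := fun q => by
    have hq : ‖star q.1‖ = 1 := by simp
    have hqq : q.1 * star q.1 = 1 := by
      rw [Quaternion.self_mul_star, Quaternion.normSq_eq_norm_mul_self]; simp
    refine ((mul_one _).symm.trans (congrArg _ hq.symm)).trans ?_
    rw [← norm_mul]
    congr 1
    simp only [map_add, map_mul, aeval_X, aeval_C, Quaternion.algebraMap_def,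
      add_mul, mul_assoc, sq, hqq, mul_one]
  simp only [hconj]
  have hre : ∀ q : 𝕊, |(a + c) * q.1.re + b| ≤ ‖(a : Quaternion ℝ) * q.1 + b + c * star q.1‖ :=
    fun q => by
      refine le_trans (le_of_eq ?_) (abs_re_le_norm _)
      congr 1
      simp
      ring
  have him : ∀ q : 𝕊, |(a - c) * q.1.imI| ≤ ‖(a : Quaternion ℝ) * q.1 + b + c * star q.1‖ :=
    fun q => by
      refine le_trans (le_of_eq ?_) (abs_imI_le_norm _)
      congr 1
      simp
      ring
  by_cases hac : a + c = 0
  · by_cases hb : b = 0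
    · have hac' : a - c ≠ 0 := fun h => by
        have ha0 : a = 0 := by linarith
        have hc0 : c = 0 := by linarith
        exact hp (by simp [ha0, hb, hc0])
      refine hasPowerSublevelBound_imI.of_le_mul (inv_pos.2 (abs_pos.2 hac')) fun q => ?_
      rw [inv_mul_eq_div, le_div_iff₀' (abs_pos.2 hac'), ← abs_mul]
      exact him q
    · refine HasPowerSublevelBound.of_pos_le (abs_pos.2 hb) fun q => ?_
      simpa [hac] using hre q
  · refine (hasPowerSublevelBound_re_sub (-b / (a + c))).of_le_mul
      (inv_pos.2 (abs_pos.2 hac)) fun q => ?_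
    rw [inv_mul_eq_div, le_div_iff₀' (abs_pos.2 hac), ← abs_mul]
    refine (le_of_eq ?_).trans (hre q)
    congr 1
    field_simp
    ring

theorem hasPowerSublevelBound_aeval {p : ℝ[X]} (hp : p ≠ 0) :
    HasPowerSublevelBound muH fun q : 𝕊 => ‖aeval q.1 p‖ := by
  induction p using WfDvdMonoid.induction_on_irreducible with
  | zero => exact absurd rfl hp
  | unit u hu =>
    exact hasPowerSublevelBound_of_natDegree_le_two hp (by simp [natDegree_eq_zero_of_isUnit hu])
  | mul r i hr hi ih =>
    simp only [map_mul, norm_mul]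
    exact (hasPowerSublevelBound_of_natDegree_le_two hi.ne_zero hi.natDegree_le_two).mul (ih hr)

/-- The symmetrization of `P = A + B i + C j + D k` with commuting `A, B, C, D` is the sum of
their squares, and it is a combination of multiples of `P`. -/
theorem sum_sq_eq_combination {A B C D : Quaternion ℝ} (hAB : Commute A B) (hAC : Commute A C)
    (hAD : Commute A D) (hBC : Commute B C) (hBD : Commute B D) (hCD : Commute C D)
    {P : Quaternion ℝ}
    (hP : P = A + B * ofComponents 0 1 0 0 + C * ofComponents 0 0 1 0 + D * ofComponents 0 0 0 1) :
    A * A + B * B + C * C + D * D =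
      A * P - B * P * ofComponents 0 1 0 0 - C * P * ofComponents 0 0 1 0 -
        D * P * ofComponents 0 0 0 1 := by
  have hii : ofComponents 0 1 0 0 * ofComponents 0 1 0 0 = -1 := by ext <;> simp
  have hjj : ofComponents 0 0 1 0 * ofComponents 0 0 1 0 = -1 := by ext <;> simp
  have hkk : ofComponents 0 0 0 1 * ofComponents 0 0 0 1 = -1 := by ext <;> simp
  have hij : ofComponents 0 1 0 0 * ofComponents 0 0 1 0 = ofComponents 0 0 0 1 := by
    ext <;> simp
  have hji : ofComponents 0 0 1 0 * ofComponents 0 1 0 0 = -ofComponents 0 0 0 1 := by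
    ext <;> simp
  have hjk : ofComponents 0 0 1 0 * ofComponents 0 0 0 1 = ofComponents 0 1 0 0 := by
    ext <;> simp
  have hkj : ofComponents 0 0 0 1 * ofComponents 0 0 1 0 = -ofComponents 0 1 0 0 := by
    ext <;> simp
  have hki : ofComponents 0 0 0 1 * ofComponents 0 1 0 0 = ofComponents 0 0 1 0 := by
    ext <;> simp
  have hik : ofComponents 0 1 0 0 * ofComponents 0 0 0 1 = -ofComponents 0 0 1 0 := by
    ext <;> simp
  rw [hP]
  simp only [mul_add, add_mul, mul_assoc, hii, hjj, hkk, hij, hji, hjk, hkj, hki, hik, mul_neg,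
    mul_one, hAB.symm.left_comm, hAC.symm.left_comm, hAD.symm.left_comm, hBC.symm.left_comm,
    hBD.symm.left_comm, hCD.symm.left_comm]
  abel

theorem exists_norm_aeval_le (p : ℝ[X]) : ∃ M : ℝ, ∀ q : 𝕊, ‖aeval q.1 p‖ ≤ M := by
  obtain ⟨M, hM⟩ := (isCompact_sphere (0 : Quaternion ℝ) 1).exists_bound_of_continuousOn
    (p.continuous_aeval (A := Quaternion ℝ)).continuousOn
  exact ⟨M, fun q => hM q.1 q.2⟩

theorem eq_zero_of_sum_C_mul_X_pow_eq_zero {n : ℕ} {b : Fin n → ℝ}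
    (h : ∑ k, C (b k) * X ^ (k : ℕ) = 0) (k : Fin n) : b k = 0 := by
  simpa [finsetSum_coeff, coeff_X_pow, Fin.val_inj] using congrArg (coeff · (k : ℕ)) h

theorem hasPowerSublevelBound_slice_regular {n : ℕ} {a : Fin n → Quaternion ℝ} (ha : a ≠ 0) :
    HasPowerSublevelBound muH fun q : 𝕊 => ‖∑ k : Fin n, q.1 ^ (k : ℕ) * a k‖ := by
  let p (f : Quaternion ℝ → ℝ) : ℝ[X] := ∑ k, C (f (a k)) * X ^ (k : ℕ)
  set A := p (·.re) with hA
  set B := p (·.imI) with hB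
  set D := p (·.imJ) with hD
  set E := p (·.imK) with hE
  have hR : A * A + B * B + D * D + E * E ≠ 0 := fun h => by
    have hx : ∀ x, eval x A = 0 ∧ eval x B = 0 ∧ eval x D = 0 ∧ eval x E = 0 := fun x => by
      have := congrArg (eval x) h
      simp only [eval_add, eval_mul, eval_zero] at this
      refine ⟨?_, ?_, ?_, ?_⟩ <;>
      nlinarith [mul_self_nonneg (eval x A), mul_self_nonneg (eval x B),
        mul_self_nonneg (eval x D), mul_self_nonneg (eval x E)]
    refine ha (funext fun k => ?_)
    ext
    · exact eq_zero_of_sum_C_mul_X_pow_eq_zero (funext fun x => by simpa using (hx x).1) k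
    · exact eq_zero_of_sum_C_mul_X_pow_eq_zero (funext fun x => by simpa using (hx x).2.1) k
    · exact eq_zero_of_sum_C_mul_X_pow_eq_zero (funext fun x => by simpa using (hx x).2.2.1) k
    · exact eq_zero_of_sum_C_mul_X_pow_eq_zero (funext fun x => by simpa using (hx x).2.2.2) k
  obtain ⟨MA, hMA⟩ := exists_norm_aeval_le A
  obtain ⟨MB, hMB⟩ := exists_norm_aeval_le B
  obtain ⟨MD, hMD⟩ := exists_norm_aeval_le D
  obtain ⟨ME, hME⟩ := exists_norm_aeval_le E
  refine (hasPowerSublevelBound_aeval hR).of_le_mul (c := max (MA + MB + MD + ME) 1)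
    (by positivity) fun q => ?_
  have hcomm (f g : ℝ[X]) : Commute (aeval q.1 f) (aeval q.1 g) := (Commute.all f g).map _
  have hP : ∑ k : Fin n, q.1 ^ (k : ℕ) * a k = aeval q.1 A + aeval q.1 B * ofComponents 0 1 0 0 +
      aeval q.1 D * ofComponents 0 0 1 0 + aeval q.1 E * ofComponents 0 0 0 1 := by
    simp only [hA, hB, hD, hE, p, map_sum, map_mul, map_pow, aeval_X, aeval_C, Finset.sum_mul,
      ← Finset.sum_add_distrib, Quaternion.algebraMap_def]
    refine Finset.sum_congr rfl fun k _ => ?_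
    simp only [Quaternion.coe_commutes, mul_assoc, ← mul_add]
    congr 1
    ext <;> simp
  have hnorm : ∀ {b c d : ℝ}, b ^ 2 + c ^ 2 + d ^ 2 = 1 → ‖ofComponents 0 b c d‖ = 1 :=
    fun h => mem_sphere_zero_iff_norm.1 (ofComponents_mem_sphere (by linarith))
  have hi : ‖ofComponents 0 1 0 0‖ = 1 := hnorm (by norm_num)
  have hj : ‖ofComponents 0 0 1 0‖ = 1 := hnorm (by norm_num)
  have hk : ‖ofComponents 0 0 0 1‖ = 1 := hnorm (by norm_num)
  simp only [map_add, map_mul]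
  rw [sum_sq_eq_combination (hcomm _ _) (hcomm _ _) (hcomm _ _) (hcomm _ _) (hcomm _ _)
    (hcomm _ _) hP]
  set P := ∑ k : Fin n, q.1 ^ (k : ℕ) * a k
  calc _ ≤ ‖aeval q.1 A * P‖ + ‖aeval q.1 B * P * ofComponents 0 1 0 0‖ +
        ‖aeval q.1 D * P * ofComponents 0 0 1 0‖ + ‖aeval q.1 E * P * ofComponents 0 0 0 1‖ := by
        refine (norm_sub_le _ _).trans ?_
        gcongr
        refine (norm_sub_le _ _).trans ?_
        gcongr
        exact norm_sub_le _ _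
    _ = (‖aeval q.1 A‖ + ‖aeval q.1 B‖ + ‖aeval q.1 D‖ + ‖aeval q.1 E‖) * ‖P‖ := by
        simp only [norm_mul, hi, hj, hk]
        ring
    _ ≤ (MA + MB + MD + ME) * ‖P‖ := by
        gcongr
        exacts [hMA q, hMB q, hMD q, hME q]
    _ ≤ max (MA + MB + MD + ME) 1 * ‖P‖ := by
        gcongr
        exact le_max_left _ _

end UnitQuaternion

/-- polynomial measure bound for small values of a slice regular polynomial. -/
theorem measure_small_values_slice_regular (n : ℕ) (a : Fin (n + 1) → Quaternion ℝ)
    (ha : a ≠ 0) :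
    ∃ C > (0 : ℝ), ∃ δ > (0 : ℝ), ∀ ε > (0 : ℝ),
      muH {q : Metric.sphere (0 : Quaternion ℝ) 1 |
          ‖∑ k : Fin (n + 1), (q : Quaternion ℝ) ^ (k : ℕ) * a k‖ ≤ ε} ≤
        ENNReal.ofReal (C * ε ^ δ) := by
  obtain ⟨C, hC, δ, hδ, h⟩ := UnitQuaternion.hasPowerSublevelBound_slice_regular ha
  refine ⟨C, hC, δ, hδ, fun ε hε => ?_⟩
  rw [ENNReal.le_ofReal_iff_toReal_le (measure_ne_top _ _) (by positivity)]
  exact h ε hε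
end
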